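/- arXiv:2402.00576 — 6 statements merged into one kernel-verified Lean document; each statement's English description precedes it below -/
import Mathlib

section
/- The tropical ball is tropically convex: for every d ≥ 1, x ∈ ℝ^d, r ≥ 0, all y, z ∈ ℝ^d with d_tr(x,y) ≤ r and d_tr(x,z) ≤ r, and all λ, μ ∈ ℝ with max(λ, μ) = 0, the tropical linear combination u defined coordinatewise by u_i = max(λ + y_i, μ + z_i) satisfies d_tr(x,u) ≤ r. Together with classical convexity this expresses that tropical balls are polytropes. -/
/-! A ball is cut out by the inequalities `(x i - y i) - (x j - y j) ≤ r` over all pairs `i, j`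
(`dtr_le_iff`), that is, `y j - y i ≤ r - (x i - x j)`. For the combination `u`, the maximum
defining `u j` is attained by one of the two points, say `u j = lam + y j`, while
`u i ≥ lam + y i`; hence `u j - u i ≤ y j - y i` and the inequality passes from `y` to `u`. -/

/-- The tropical metric on `ℝ^d`:
`d_tr(x, y) = max_i (x_i - y_i) - min_i (x_i - y_i)`. -/
noncomputable def dtr {d : ℕ} [NeZero d] (x y : Fin d → ℝ) : ℝ :=
  (Finset.univ.sup' Finset.univ_nonempty fun i => x i - y i) -
  (Finset.univ.inf' Finset.univ_nonempty fun i => x i - y i)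

/-- Turns the difference of a maximum and a minimum into a family of pairwise inequalities. -/
theorem dtr_le_iff {d : ℕ} [NeZero d] (x y : Fin d → ℝ) (r : ℝ) :
    dtr x y ≤ r ↔ ∀ i j, (x i - y i) - (x j - y j) ≤ r := by
  unfold dtr
  constructor
  · intro h i j
    have h1 := Finset.le_sup' (fun i => x i - y i) (Finset.mem_univ i)
    have h2 := Finset.inf'_le (fun i => x i - y i) (Finset.mem_univ j)
    linarith
  · intro h
    obtain ⟨i, -, hi⟩ := Finset.exists_mem_eq_sup' (Finset.univ_nonempty (α := Fin d))
      (fun i => x i - y i)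
    obtain ⟨j, -, hj⟩ := Finset.exists_mem_eq_inf' (Finset.univ_nonempty (α := Fin d))
      (fun i => x i - y i)
    rw [hi, hj]
    exact h i j

/-- The tropical ball is tropically convex: max-plus combinations (with
max(λ,μ) = 0) of points of the ball stay in the ball. -/
theorem tropical_ball_tropically_convex (d : ℕ) [NeZero d] (x : Fin d → ℝ) (r : ℝ)
    (hr : 0 ≤ r) (y z : Fin d → ℝ) (hy : dtr x y ≤ r) (hz : dtr x z ≤ r)
    (lam mu : ℝ) (hlm : max lam mu = 0) :
    dtr x (fun i => max (lam + y i) (mu + z i)) ≤ r := by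
  rw [dtr_le_iff] at hy hz ⊢
  intro i j
  have hyi := le_max_left (lam + y i) (mu + z i)
  have hzi := le_max_right (lam + y i) (mu + z i)
  rcases max_choice (lam + y j) (mu + z j) with h | h
  · rw [h]
    linarith [hy i j]
  · rw [h]
    linarith [hz i j]
end

section
/- Full-dimensional bisector cells and weak general position: let d ≥ 2 and a, b ∈ ℝ^d. The tropical bisector bis(a,b) = {x ∈ ℝ^d : d_tr(x,a) = d_tr(x,b)} has empty interior in ℝ^d if and only if the coordinates of a − b are pairwise distinct (i.e., a_i − b_i ≠ a_j − b_j whenever i ≠ j), which is exactly the condition that the pair {a, b} is in weak general position. -/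
lemma le_dtr {d : ℕ} [NeZero d] (x y : Fin d → ℝ) (p q : Fin d) :
    (x p - y p) - (x q - y q) ≤ dtr x y := by
  have h1 := Finset.le_sup' (fun i => x i - y i) (Finset.mem_univ p)
  have h2 := Finset.inf'_le (fun i => x i - y i) (Finset.mem_univ q)
  unfold dtr
  linarith

lemma dtr_eq {d : ℕ} [NeZero d] (x y : Fin d → ℝ) (i j : Fin d)
    (hi : ∀ k, x k - y k ≤ x i - y i) (hj : ∀ k, x j - y j ≤ x k - y k) :
    dtr x y = (x i - y i) - (x j - y j) := by
  refine le_antisymm ?_ (le_dtr x y i j)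
  have h1 := Finset.sup'_le Finset.univ_nonempty (fun i => x i - y i) (fun k _ => hi k)
  have h2 := Finset.le_inf' Finset.univ_nonempty (fun i => x i - y i) (fun k _ => hj k)
  unfold dtr
  linarith

/-- When all coordinates of `x - y` agree, every pair attains the distance, so for `d ≥ 2` the
maximizing and minimizing indices can always be taken distinct. -/
lemma exists_max_min {d : ℕ} [NeZero d] (hd : 2 ≤ d) (x y : Fin d → ℝ) :
    ∃ i j : Fin d, i ≠ j ∧ (∀ k, x k - y k ≤ x i - y i) ∧ (∀ k, x j - y j ≤ x k - y k) := by
  obtain ⟨i, hi⟩ := Finite.exists_max fun k => x k - y k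
  obtain ⟨j, hj⟩ := Finite.exists_min fun k => x k - y k
  by_cases hij : i = j
  · subst hij
    have : Nontrivial (Fin d) := Fin.nontrivial_iff_two_le.2 hd
    obtain ⟨m, hm⟩ := exists_ne i
    exact ⟨i, m, hm.symm, hi, fun k => by linarith [hi m, hj k]⟩
  · exact ⟨i, j, hij, hi, hj⟩

/-- The tropical bisector of a and b has empty interior in ℝ^d iff the
coordinates of a - b are pairwise distinct (weak general position). -/
theorem tropical_bisector_empty_interior_iff (d : ℕ) [NeZero d] (hd : 2 ≤ d)
    (a b : Fin d → ℝ) :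
    interior {x : Fin d → ℝ | dtr x a = dtr x b} = ∅ ↔
      ∀ i j : Fin d, i ≠ j → a i - b i ≠ a j - b j := by
  constructor
  · intro h i j hij hab
    -- `M` dominates every difference of two coordinates of `a`, and likewise for `b`.
    obtain ⟨M, hM⟩ : ∃ M : ℝ, ∀ k l, |a k - a l| < M ∧ |b k - b l| < M := by
      obtain ⟨p, hp⟩ := Finite.exists_max
        fun p : Fin d × Fin d => |a p.1 - a p.2| + |b p.1 - b p.2|
      refine ⟨|a p.1 - a p.2| + |b p.1 - b p.2| + 1, fun k l => ?_⟩
      have := hp (k, l)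
      dsimp only at this
      constructor <;> linarith [abs_nonneg (a k - a l), abs_nonneg (b k - b l)]
    let x₀ : Fin d → ℝ := fun k => if k = i then M else if k = j then -M else 0
    have hM0 : 0 < M := (abs_nonneg _).trans_lt (hM i i).1
    have hi₀ : x₀ i = M := by simp [x₀]
    have hj₀ : x₀ j = -M := by simp [x₀, hij.symm]
    have hle : ∀ k, k ≠ i → x₀ k ≤ 0 := by
      intro k hk
      simp only [x₀, if_neg hk]
      split_ifs <;> linarith
    have hge : ∀ k, k ≠ j → 0 ≤ x₀ k := by
      intro k hk
      simp only [x₀, if_neg hk]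
      split_ifs <;> linarith
    have key : ∀ c : Fin d → ℝ, (∀ k l, |c k - c l| < M) →
        ∀ᶠ x in nhds x₀, dtr x c = (x i - c i) - (x j - c j) := by
      intro c hc
      have h1 : ∀ᶠ x in nhds x₀, ∀ k, x k - c k ≤ x i - c i := by
        refine Filter.eventually_all.2 fun k => ?_
        by_cases hk : k = i
        · subst hk; simp
        · have hlt : x₀ k - c k < x₀ i - c i := by
            linarith [hle k hk, (abs_lt.1 (hc k i)).1]
          have hopen : IsOpen {x : Fin d → ℝ | x k - c k < x i - c i} :=
            isOpen_lt (by fun_prop) (by fun_prop)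
          exact (hopen.eventually_mem hlt).mono fun x hx => le_of_lt hx
      have h2 : ∀ᶠ x in nhds x₀, ∀ k, x j - c j ≤ x k - c k := by
        refine Filter.eventually_all.2 fun k => ?_
        by_cases hk : k = j
        · subst hk; simp
        · have hlt : x₀ j - c j < x₀ k - c k := by
            linarith [hge k hk, (abs_lt.1 (hc k j)).2]
          have hopen : IsOpen {x : Fin d → ℝ | x j - c j < x k - c k} :=
            isOpen_lt (by fun_prop) (by fun_prop)
          exact (hopen.eventually_mem hlt).mono fun x hx => le_of_lt hx
      filter_upwards [h1, h2] with x hx1 hx2 using dtr_eq x c i j hx1 hx2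
    have hmem : x₀ ∈ interior {x : Fin d → ℝ | dtr x a = dtr x b} := by
      rw [mem_interior_iff_mem_nhds]
      filter_upwards [key a fun k l => (hM k l).1, key b fun k l => (hM k l).2] with x hxa hxb
      linarith
    rw [h] at hmem
    exact hmem
  · intro h
    by_contra hne
    obtain ⟨x, hx⟩ := Set.nonempty_iff_ne_empty.2 hne
    have hxab : dtr x a = dtr x b := (interior_subset hx : x ∈ {x | dtr x a = dtr x b})
    obtain ⟨i, j, hij, hi, hj⟩ := exists_max_min hd x a
    let v : Fin d → ℝ := fun k => if k = i then 1 else if k = j then -1 else 0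
    have hvi : v i = 1 := by simp [v]
    have hvj : v j = -1 := by simp [v, hij.symm]
    have hv1 : ∀ k, v k ≤ 1 := by
      intro k; simp only [v]; split_ifs <;> norm_num
    have hv2 : ∀ k, -1 ≤ v k := by
      intro k; simp only [v]; split_ifs <;> norm_num
    have hv3 : ∀ k, k ≠ i → v k ≤ 0 := by
      intro k hk; simp only [v, if_neg hk]; split_ifs <;> norm_num
    have hv4 : ∀ k, k ≠ j → 0 ≤ v k := by
      intro k hk; simp only [v, if_neg hk]; split_ifs <;> norm_num
    obtain ⟨t, htx, ht⟩ : ∃ t : ℝ, dtr (fun k => x k + t * v k) a =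
        dtr (fun k => x k + t * v k) b ∧ 0 < t := by
      have hc : Filter.Tendsto (fun (t : ℝ) k => x k + t * v k) (nhds 0) (nhds x) := by
        have : Continuous fun (t : ℝ) k => x k + t * v k := by fun_prop
        simpa using this.tendsto 0
      have he : ∀ᶠ t in nhdsWithin (0 : ℝ) (Set.Ioi 0), dtr (fun k => x k + t * v k) a =
          dtr (fun k => x k + t * v k) b :=
        (hc.mono_left nhdsWithin_le_nhds) (mem_interior_iff_mem_nhds.1 hx)
      exact (he.and self_mem_nhdsWithin).exists
    have hxa := dtr_eq x a i j hi hj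
    have hxa' := dtr_eq (fun k => x k + t * v k) a i j
      (fun k => by
        have := mul_le_mul_of_nonneg_left (hv1 k) ht.le
        simp only [hvi]; linarith [hi k])
      (fun k => by
        have := mul_le_mul_of_nonneg_left (hv2 k) ht.le
        simp only [hvj]; linarith [hj k])
    obtain ⟨p, q, -, hp, hq⟩ := exists_max_min hd (fun k => x k + t * v k) b
    have hxb' := dtr_eq _ b p q hp hq
    have hxb := le_dtr x b p q
    simp only [hvi, hvj] at hxa'
    -- The pair `(p, q)` gains at least `2 t`, and only `(i, j)` can gain that much.
    have hgain : 2 * t ≤ t * v p - t * v q := by linarith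
    have hpi : p = i := by
      by_contra hne
      nlinarith [hv3 p hne, hv2 q]
    have hqj : q = j := by
      by_contra hne
      nlinarith [hv4 q hne, hv1 p]
    subst hpi hqj
    simp only [hvi, hvj] at hxb'
    exact h p q hij (by linarith)
end

section
/- Bisector classification in ℝ³/ℝ𝟏, boundary case w = −1: for every x ∈ ℝ³, d_tr(x, (0,0,0)) = d_tr(x, (1,−1,0)) if and only if x_2 = x_1 − 1. In particular the tropical bisector of (0,0,0) and (1,−1,0) is the single straight (hyper)plane {x ∈ ℝ³ : x_1 − x_2 = 1}. -/
/-- The distance `dtr x y` in `ℝ³` with the maximum and minimum written out. -/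
lemma dtr_three (x y : Fin 3 → ℝ) :
    dtr x y = max (x 0 - y 0) (max (x 1 - y 1) (x 2 - y 2)) -
      min (x 0 - y 0) (min (x 1 - y 1) (x 2 - y 2)) := by
  have hu : (Finset.univ : Finset (Fin 3)) = {0, 1, 2} := by decide
  simp [dtr, hu]

/-- Moving `a` down and `b` up by `1` when `a > b + 1` strictly shrinks the spread of `a, b, c`:
the new values lie in `[min, max]`, and both extremes cannot be kept, since `c` realises at most
one of them. -/
lemma spread_shift_lt (a b c : ℝ) (h : 1 < a - b) :
    max (a - 1) (max (b + 1) c) - min (a - 1) (min (b + 1) c) <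
      max a (max b c) - min a (min b c) := by
  grind

/-- Bisector classification in ℝ³/ℝ𝟏, boundary case w = -1: the tropical
bisector of (0,0,0) and (1,-1,0) is the plane x₂ = x₁ - 1. -/
theorem tropical_bisector_w_neg_one (x : Fin 3 → ℝ) :
    dtr x ![(0 : ℝ), 0, 0] = dtr x ![(1 : ℝ), -1, 0] ↔ x 1 = x 0 - 1 := by
  have hl : dtr x ![(0 : ℝ), 0, 0] =
      max (x 0) (max (x 1) (x 2)) - min (x 0) (min (x 1) (x 2)) := by
    simp [dtr_three]
  have hr : dtr x ![(1 : ℝ), -1, 0] =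
      max (x 0 - 1) (max (x 1 + 1) (x 2)) - min (x 0 - 1) (min (x 1 + 1) (x 2)) := by
    simp [dtr_three]
  rw [hl, hr]
  constructor
  · intro h
    rcases lt_trichotomy (x 0 - x 1) 1 with hs | hs | hs
    · have := spread_shift_lt (x 1 + 1) (x 0 - 1) (x 2) (by linarith)
      rw [add_sub_cancel_right, sub_add_cancel, max_left_comm (x 1), min_left_comm (x 1),
        max_left_comm (x 1 + 1), min_left_comm (x 1 + 1)] at this
      exact absurd h this.ne
    · linarith
    · exact absurd h (spread_shift_lt _ _ _ hs).ne'
  · intro h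
    rw [h, sub_add_cancel, max_left_comm, min_left_comm]
end

section
/- Bisector classification in ℝ³/ℝ𝟏 for −1 < w < 0: fix w ∈ ℝ with −1 < w < 0. For all x_1, x_2 ∈ ℝ, d_tr((x_1, x_2, 0), (0,0,0)) = d_tr((x_1, x_2, 0), (1, w, 0)) if and only if x_2 = f(x_1), where f : ℝ → ℝ is the continuous piecewise-linear function defined by f(x_1) = x_1 − 1 for x_1 ≤ 0; f(x_1) = 2x_1 − 1 for 0 ≤ x_1 ≤ (1+w)/2; f(x_1) = x_1 − 1/2 + w/2 for (1+w)/2 ≤ x_1 ≤ (1−w)/2; f(x_1) = 2x_1 − 1 + w for (1−w)/2 ≤ x_1 ≤ 1; and f(x_1) = x_1 + w for x_1 ≥ 1. Thus the bisector of (0,0,0) and (1,w,0) in the slice {x_3 = 0} consists of exactly five line segments. -/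
/-- The continuous piecewise-linear function describing the bisector of
(0,0,0) and (1,w,0) in the slice x₃ = 0 for -1 < w < 0. -/
noncomputable def bisf (w x1 : ℝ) : ℝ :=
  if x1 ≤ 0 then x1 - 1
  else if x1 ≤ (1 + w) / 2 then 2 * x1 - 1
  else if x1 ≤ (1 - w) / 2 then x1 - 1 / 2 + w / 2
  else if x1 ≤ 1 then 2 * x1 - 1 + w
  else x1 + w

/-- On three coordinates the tropical distance is a max minus a min of three reals. -/
theorem dtr_vec3 (a b c p q r : ℝ) :
    dtr ![a, b, c] ![p, q, r] =
      max (a - p) (max (b - q) (c - r)) - min (a - p) (min (b - q) (c - r)) := by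
  have hu : (Finset.univ : Finset (Fin 3)) = {0, 1, 2} := by decide
  simp [dtr, hu]

/-- Bisector classification in ℝ³/ℝ𝟏 for -1 < w < 0: a point (x₁,x₂,0) is on
the tropical bisector of (0,0,0) and (1,w,0) iff x₂ = f(x₁), where f is the
five-piece piecewise-linear function bisf. -/
theorem tropical_bisector_classification (w : ℝ) (hw₁ : -1 < w) (hw₀ : w < 0)
    (x1 x2 : ℝ) :
    dtr ![x1, x2, (0 : ℝ)] ![(0 : ℝ), 0, 0] =
      dtr ![x1, x2, (0 : ℝ)] ![(1 : ℝ), w, 0] ↔ x2 = bisf w x1 := by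
  rw [dtr_vec3, dtr_vec3, bisf]
  grind
end

section
/- Distribution of the tropical distance of a Gaussian point from its center: let d ≥ 1, let μ be the product measure on ℝ^d of d copies of the standard Gaussian measure N(0,1), let Φ and φ denote the standard normal CDF and density, and let t ≥ 0. Then μ({x ∈ ℝ^d : max_i x_i − min_i x_i ≤ t}) = d · ∫_{−∞}^{∞} (Φ(u + t) − Φ(u))^{d−1} φ(u) du. Equivalently, for X with i.i.d. standard Gaussian coordinates centered at a point w, P(d_tr(w, X) ≤ t) is given by this integral. -/
/-!
Let `ν` be an atomless probability measure on `ℝ` and `x` a vector of `n + 1` independent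
`ν`-distributed coordinates. Almost surely the coordinates are distinct, so the minimum is attained
at exactly one index `i`, and the range of `x` is at most `t` iff all other coordinates lie in
`(x i, x i + t]`. Up to a null set the event of range at most `t` is therefore the disjoint union
over `i` of the events `minEvent n t i`. Splitting off the `i`-th coordinate by Fubini
(`pi_minEvent`), each of these has probability `∫⁻ u, ν (u, u + t] ^ n ∂ν`, whence the factor `n + 1`
(`pi_range_le`). For the Gaussian measure, `ν (u, u + t] = Φ (u + t) - Φ u` and `ν` has density `φ`.
-/

open MeasureTheory ProbabilityTheory

/-- The standard normal density φ(s) = e^{-s²/2}/√(2π). -/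
noncomputable def stdNormalPDF (s : ℝ) : ℝ :=
  Real.exp (-(s ^ 2) / 2) / Real.sqrt (2 * Real.pi)

/-- The standard normal CDF Φ(u) = ∫_{-∞}^u φ(s) ds. -/
noncomputable def stdNormalCDF (u : ℝ) : ℝ :=
  ∫ s in Set.Iic u, stdNormalPDF s

/-- The event that every coordinate other than the `i`-th lies in `(x i, x i + t]`. For `t ≥ 0` this
says that the minimum is attained at `i` only and the range is at most `t`. -/
def minEvent (n : ℕ) (t : ℝ) (i : Fin (n + 1)) : Set (Fin (n + 1) → ℝ) :=
  {x | ∀ j : Fin n, x (i.succAbove j) ∈ Set.Ioc (x i) (x i + t)}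

lemma measurableSet_minEvent (n : ℕ) (t : ℝ) (i : Fin (n + 1)) :
    MeasurableSet (minEvent n t i) := by
  have : minEvent n t i = ⋂ j : Fin n, ({x | x i < x (i.succAbove j)} ∩
      {x | x (i.succAbove j) ≤ x i + t}) := by
    ext x; simp [minEvent]
  rw [this]
  exact MeasurableSet.iInter fun j =>
    (measurableSet_lt (by fun_prop) (by fun_prop)).inter
      (measurableSet_le (by fun_prop) (by fun_prop))

lemma pi_minEvent (ν : Measure ℝ) [IsProbabilityMeasure ν] (n : ℕ) (t : ℝ) (i : Fin (n + 1)) :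
    (Measure.pi fun _ : Fin (n + 1) => ν) (minEvent n t i) =
      ∫⁻ u, ν (Set.Ioc u (u + t)) ^ n ∂ν := by
  have hmp := measurePreserving_piFinSuccAbove (fun _ : Fin (n + 1) => ν) i
  set B : Set (ℝ × (Fin n → ℝ)) := {p | ∀ j, p.2 j ∈ Set.Ioc p.1 (p.1 + t)} with hB
  have hBm : MeasurableSet B := by
    have : B = ⋂ j : Fin n, ({p | p.1 < p.2 j} ∩ {p | p.2 j ≤ p.1 + t}) := by
      ext x; simp [hB]
    rw [this]
    exact MeasurableSet.iInter fun j =>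
      (measurableSet_lt (by fun_prop) (by fun_prop)).inter
        (measurableSet_le (by fun_prop) (by fun_prop))
  have hpre : minEvent n t i =
      (MeasurableEquiv.piFinSuccAbove (fun _ : Fin (n + 1) => ℝ) i) ⁻¹' B := rfl
  rw [hpre, hmp.measure_preimage hBm.nullMeasurableSet, Measure.prod_apply hBm]
  refine lintegral_congr fun u => ?_
  have : Prod.mk u ⁻¹' B = Set.univ.pi fun _ : Fin n => Set.Ioc u (u + t) := by
    ext y; simp [hB]
  rw [this, Measure.pi_pi]
  simp

/-- Two coordinates of a vector with independent atomless coordinates almost surely differ. -/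
lemma pi_coord_eq_null (ν : Measure ℝ) [IsProbabilityMeasure ν] [NullSingletonClass ν] (n : ℕ)
    (i : Fin (n + 1)) (j : Fin n) :
    (Measure.pi fun _ : Fin (n + 1) => ν) {x | x (i.succAbove j) = x i} = 0 := by
  have hmp := measurePreserving_piFinSuccAbove (fun _ : Fin (n + 1) => ν) i
  have hBm : MeasurableSet {p : ℝ × (Fin n → ℝ) | p.2 j = p.1} :=
    measurableSet_eq_fun (by fun_prop) (by fun_prop)
  have hpre : {x : Fin (n + 1) → ℝ | x (i.succAbove j) = x i} =
      (MeasurableEquiv.piFinSuccAbove (fun _ : Fin (n + 1) => ℝ) i) ⁻¹'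
        {p : ℝ × (Fin n → ℝ) | p.2 j = p.1} := rfl
  rw [hpre, hmp.measure_preimage hBm.nullMeasurableSet, Measure.prod_apply hBm]
  refine (lintegral_congr fun u => ?_).trans lintegral_zero
  exact Measure.pi_hyperplane (fun _ : Fin n => ν) j u

lemma pi_range_le (ν : Measure ℝ) [IsProbabilityMeasure ν] [NullSingletonClass ν] (n : ℕ) (t : ℝ)
    (ht : 0 ≤ t) :
    (Measure.pi fun _ : Fin (n + 1) => ν)
      {x | (Finset.univ.sup' Finset.univ_nonempty fun i => x i) -
          (Finset.univ.inf' Finset.univ_nonempty fun i => x i) ≤ t} =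
      (n + 1) * ∫⁻ u, ν (Set.Ioc u (u + t)) ^ n ∂ν := by
  have hU : (Measure.pi fun _ : Fin (n + 1) => ν) (⋃ i, minEvent n t i) =
      (n + 1) * ∫⁻ u, ν (Set.Ioc u (u + t)) ^ n ∂ν := by
    rw [measure_iUnion _ (measurableSet_minEvent n t)]
    · simp [pi_minEvent]
    · intro i k hik
      refine Set.disjoint_left.2 fun x hx hy => ?_
      obtain ⟨j, hj⟩ := Fin.exists_succAbove_eq hik
      obtain ⟨l, hl⟩ := Fin.exists_succAbove_eq hik.symm
      have h1 := (hx l).1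
      have h2 := (hy j).1
      rw [hl] at h1
      rw [hj] at h2
      exact lt_asymm h1 h2
  rw [← hU]
  apply measure_congr
  have hne : ∀ᵐ x ∂(Measure.pi fun _ : Fin (n + 1) => ν),
      ∀ (i : Fin (n + 1)) (j : Fin n), x (i.succAbove j) ≠ x i := by
    rw [ae_all_iff]; intro i
    rw [ae_all_iff]; intro j
    rw [ae_iff]
    simpa using pi_coord_eq_null ν n i j
  filter_upwards [hne] with x hx
  refine propext ?_
  change (Finset.univ.sup' Finset.univ_nonempty fun i => x i) -
          (Finset.univ.inf' Finset.univ_nonempty fun i => x i) ≤ t ↔ x ∈ ⋃ i, minEvent n t i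
  rw [Set.mem_iUnion]
  constructor
  · intro h
    obtain ⟨i, -, hi⟩ := Finset.exists_mem_eq_inf' (Finset.univ_nonempty (α := Fin (n + 1)))
      (fun i => x i)
    refine ⟨i, fun j => ⟨lt_of_le_of_ne ?_ (hx i j).symm, ?_⟩⟩
    · rw [← hi]
      exact Finset.inf'_le (fun i => x i) (Finset.mem_univ _)
    · have := Finset.le_sup' (fun i => x i) (Finset.mem_univ (i.succAbove j))
      linarith
  · rintro ⟨i, hi⟩
    have h1 : (Finset.univ.sup' Finset.univ_nonempty fun i => x i) ≤ x i + t := by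
      refine Finset.sup'_le _ _ fun k _ => ?_
      rcases eq_or_ne k i with rfl | hk
      · linarith
      · obtain ⟨j, rfl⟩ := Fin.exists_succAbove_eq hk
        exact (hi j).2
    have h2 : x i ≤ (Finset.univ.inf' Finset.univ_nonempty fun i => x i) := by
      refine Finset.le_inf' _ _ fun k _ => ?_
      rcases eq_or_ne k i with rfl | hk
      · exact le_rfl
      · obtain ⟨j, rfl⟩ := Fin.exists_succAbove_eq hk
        exact (hi j).1.le
    linarith

lemma stdNormalPDF_eq (s : ℝ) : stdNormalPDF s = gaussianPDFReal 0 1 s := by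
  simp [stdNormalPDF, gaussianPDFReal, div_eq_inv_mul]

lemma stdNormalCDF_eq (u : ℝ) : stdNormalCDF u = (gaussianReal 0 1).real (Set.Iic u) := by
  have h : 0 ≤ ∫ s in Set.Iic u, gaussianPDFReal 0 1 s :=
    integral_nonneg fun s => gaussianPDFReal_nonneg 0 1 s
  rw [measureReal_def, gaussianReal_apply_eq_integral 0 one_ne_zero, ENNReal.toReal_ofReal h]
  simp only [stdNormalCDF, stdNormalPDF_eq]

lemma stdNormalCDF_sub (u t : ℝ) (ht : 0 ≤ t) :
    stdNormalCDF (u + t) - stdNormalCDF u = (gaussianReal 0 1).real (Set.Ioc u (u + t)) := by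
  have hset : Set.Ioc u (u + t) = Set.Iic (u + t) \ Set.Iic u := by
    ext s; simp [and_comm]
  rw [stdNormalCDF_eq, stdNormalCDF_eq, hset,
    measureReal_sdiff (Set.Iic_subset_Iic.2 (by linarith)) measurableSet_Iic]

/-- Distribution of the tropical distance (range) of a standard Gaussian point
from its center: P(max_i X_i - min_i X_i ≤ t) = d ∫ (Φ(u+t) - Φ(u))^{d-1} φ(u) du. -/
theorem gaussian_tropical_range_cdf (d : ℕ) [NeZero d] (t : ℝ) (ht : 0 ≤ t) :
    (Measure.pi fun _ : Fin d => gaussianReal 0 1)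
      {x : Fin d → ℝ |
        (Finset.univ.sup' Finset.univ_nonempty fun i => x i) -
          (Finset.univ.inf' Finset.univ_nonempty fun i => x i) ≤ t} =
      ENNReal.ofReal
        (d * ∫ u : ℝ, (stdNormalCDF (u + t) - stdNormalCDF u) ^ (d - 1) * stdNormalPDF u) := by
  obtain ⟨n, rfl⟩ := Nat.exists_eq_succ_of_ne_zero (NeZero.ne d)
  have : NullSingletonClass (gaussianReal 0 1) := nullSingletonClass_gaussianReal one_ne_zero
  set ν := gaussianReal 0 1 with hν
  refine (pi_range_le ν n t ht).trans ?_
  have hmeas : Measurable fun u => ν (Set.Ioc u (u + t)) := by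
    have : MeasurableSet ({p : ℝ × ℝ | p.1 < p.2} ∩ {p : ℝ × ℝ | p.2 ≤ p.1 + t}) :=
      (measurableSet_lt (by fun_prop) (by fun_prop)).inter
        (measurableSet_le (by fun_prop) (by fun_prop))
    exact measurable_measure_prodMk_left this
  have hint : ∫ u : ℝ, (stdNormalCDF (u + t) - stdNormalCDF u) ^ n * stdNormalPDF u =
      (∫⁻ u, ν (Set.Ioc u (u + t)) ^ n ∂ν).toReal := by
    rw [← integral_toReal (hmeas.pow_const n).aemeasurable
      (Filter.Eventually.of_forall fun u => ENNReal.pow_lt_top (measure_lt_top _ _)),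
      hν, integral_gaussianReal_eq_integral_smul one_ne_zero]
    refine integral_congr_ae (Filter.Eventually.of_forall fun u => ?_)
    simp only [stdNormalCDF_sub u t ht, stdNormalPDF_eq, ENNReal.toReal_pow, measureReal_def,
      smul_eq_mul, mul_comm]
  have hfin : ∫⁻ u, ν (Set.Ioc u (u + t)) ^ n ∂ν ≠ ⊤ := by
    refine ne_top_of_le_ne_top ENNReal.one_ne_top ?_
    calc ∫⁻ u, ν (Set.Ioc u (u + t)) ^ n ∂ν ≤ ∫⁻ _, 1 ∂ν :=
          lintegral_mono fun u => pow_le_one₀ zero_le prob_le_one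
      _ = 1 := by simp
  rw [Nat.succ_eq_add_one, Nat.add_sub_cancel, hint, ENNReal.ofReal_mul (by positivity),
    ENNReal.ofReal_toReal hfin, ENNReal.ofReal_natCast]
  push_cast
  rfl
end

section
/- Gradient of the tropical distance with respect to the weights on open sectors: let d ≥ 2, x, ω ∈ ℝ^d and k ≠ l be indices such that x_k + ω_k > x_i + ω_i for all i ≠ k and x_l + ω_l < x_i + ω_i for all i ≠ l. Then the function w ↦ d_tr(0, x + w) is differentiable at w = ω with Fréchet derivative the linear functional v ↦ v_k − v_l; i.e., ∂ d_tr(0, x + ω)/∂ ω_i = δ_{ik} − δ_{il}, where δ is the Kronecker delta. -/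
/-- The sign in `0 - y` swaps the roles of the extremes: the maximum of `-y` is attained at the
minimizing index `l`, and its minimum at the maximizing index `k`. -/
theorem dtr_zero_eq_of_sectors {d : ℕ} [NeZero d] (y : Fin d → ℝ) (k l : Fin d)
    (hk : ∀ i, y i ≤ y k) (hl : ∀ i, y l ≤ y i) : dtr 0 y = y k - y l := by
  have hsup : (Finset.univ.sup' Finset.univ_nonempty fun i => (0 : Fin d → ℝ) i - y i) = -y l := by
    apply le_antisymm
    · exact Finset.sup'_le _ _ fun i _ => by simpa using hl i
    · exact (zero_sub (y l)).ge.trans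
        (Finset.le_sup' (fun i => (0 : Fin d → ℝ) i - y i) (Finset.mem_univ l))
  have hinf : (Finset.univ.inf' Finset.univ_nonempty fun i => (0 : Fin d → ℝ) i - y i) = -y k := by
    apply le_antisymm
    · exact (Finset.inf'_le (fun i => (0 : Fin d → ℝ) i - y i) (Finset.mem_univ k)).trans
        (zero_sub (y k)).le
    · exact Finset.le_inf' _ _ fun i _ => by simpa using hk i
  rw [dtr, hsup, hinf]
  ring

/-- Gradient of the tropical distance with respect to the weights on open
sectors: w ↦ d_tr(0, x + w) is differentiable at ω with derivative
v ↦ v_k - v_l, i.e. ∂ d_tr(0, x + ω)/∂ω_i = δ_{ik} - δ_{il}. -/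
theorem tropical_dist_gradient_on_open_sectors (d : ℕ) [NeZero d] (hd : 2 ≤ d)
    (x ω : Fin d → ℝ) (k l : Fin d) (hkl : k ≠ l)
    (hmax : ∀ i : Fin d, i ≠ k → x i + ω i < x k + ω k)
    (hmin : ∀ i : Fin d, i ≠ l → x l + ω l < x i + ω i) :
    HasFDerivAt (fun w : Fin d → ℝ => dtr 0 (x + w))
      ((ContinuousLinearMap.proj k : (Fin d → ℝ) →L[ℝ] ℝ) -
        ContinuousLinearMap.proj l) ω := by
  have hK : ∀ᶠ w in nhds ω, ∀ i, i ≠ k → x i + w i < x k + w k := by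
    refine Filter.eventually_all.2 fun i => Filter.eventually_imp_distrib_left.2 fun hi => ?_
    exact (continuous_const.add (continuous_apply i)).continuousAt.eventually_lt
      (continuous_const.add (continuous_apply k)).continuousAt (hmax i hi)
  have hL : ∀ᶠ w in nhds ω, ∀ i, i ≠ l → x l + w l < x i + w i := by
    refine Filter.eventually_all.2 fun i => Filter.eventually_imp_distrib_left.2 fun hi => ?_
    exact (continuous_const.add (continuous_apply l)).continuousAt.eventually_lt
      (continuous_const.add (continuous_apply i)).continuousAt (hmin i hi)
  have haff : HasFDerivAt (fun w : Fin d → ℝ => (x k + w k) - (x l + w l))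
      ((ContinuousLinearMap.proj k : (Fin d → ℝ) →L[ℝ] ℝ) - ContinuousLinearMap.proj l) ω :=
    ((hasFDerivAt_apply k ω).const_add (x k)).sub ((hasFDerivAt_apply l ω).const_add (x l))
  refine haff.congr_of_eventuallyEq ?_
  filter_upwards [hK, hL] with w hk hl
  refine dtr_zero_eq_of_sectors (x + w) k l (fun i => ?_) fun i => ?_
  · rcases eq_or_ne i k with rfl | hi
    · exact le_rfl
    · exact (hk i hi).le
  · rcases eq_or_ne i l with rfl | hi
    · exact le_rfl
    · exact (hl i hi).le
end
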